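/- Let G be a c-closed graph on n vertices and v a vertex of G. The number of maximal cliques K of G such that v ∈ K and K \ {v} is not a maximal clique of G \ {v} is at most n · 3^{(c-1)/3}. -/

import Mathlib

/-- A graph `G` is `c`-closed if whenever two distinct vertices have at least `c`
common neighbors, they are adjacent. -/
def CClosed {V : Type*} (c : ℕ) (G : SimpleGraph V) : Prop :=
  ∀ u w : V, u ≠ w → c ≤ (G.neighborSet u ∩ G.neighborSet w).ncard → G.Adj u w

/-- `K` is a maximal clique of `G`: a clique not properly contained in any other clique. -/
def IsMaxClique {V : Type*} (G : SimpleGraph V) (K : Set V) : Prop :=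
  G.IsClique K ∧ ∀ K' : Set V, G.IsClique K' → K ⊆ K' → K = K'

/-- `K` is a maximal clique of the subgraph of `G` induced by `S`: a clique of `G`
contained in `S` that is not properly contained in any other clique of `G`
contained in `S`.  (Cliques of `G[S]` are exactly cliques of `G` contained in `S`.) -/
def IsMaxCliqueIn {V : Type*} (G : SimpleGraph V) (S : Set V) (K : Set V) : Prop :=
  K ⊆ S ∧ G.IsClique K ∧ ∀ K' : Set V, K' ⊆ S → G.IsClique K' → K ⊆ K' → K = K'

/-!
If `v ∈ K` and `K \ {v}` is not maximal in `G \ {v}`, some `w ≠ v` is adjacent to all of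
`K \ {v}`, and `w` is not adjacent to `v` because `K` is maximal. Hence `K \ {v}` is a maximal
clique of the subgraph induced by the common neighbors of `v` and `w`, of which there are at most
`c - 1`. The Moon–Moser bound leaves at most `3 ^ ((c - 1) / 3)` cliques for each `w`.

For the Moon–Moser bound itself, let `v` have maximum degree `b` in `G[S]`. Every maximal clique
contains one of the `a = |S| - b` vertices of `S` not adjacent to `v`, and removing that vertex `u`
leaves a maximal clique of its neighborhood, of size at most `b`. By induction there are at most
`a * 3 ^ (b / 3) ≤ 3 ^ ((a + b) / 3)` of them.
-/

theorem pow_three_le_three_pow (k : ℕ) : k ^ 3 ≤ 3 ^ k := by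
  obtain hk | hk := lt_or_ge k 3
  · interval_cases k <;> norm_num
  · induction k, hk using Nat.le_induction with
    | base => rfl
    | succ m hm ih =>
      calc (m + 1) ^ 3 ≤ 3 * m ^ 3 := by nlinarith [Nat.mul_le_mul hm hm]
        _ ≤ 3 * 3 ^ m := by gcongr
        _ = 3 ^ (m + 1) := (pow_succ' 3 m).symm

theorem natCast_le_three_rpow_div_three (k : ℕ) : (k : ℝ) ≤ 3 ^ ((k : ℝ) / 3) := by
  refine le_of_pow_le_pow_left₀ three_ne_zero (by positivity) ?_
  calc (k : ℝ) ^ 3 ≤ 3 ^ k := mod_cast pow_three_le_three_pow k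
    _ = ((3 : ℝ) ^ ((k : ℝ) / 3)) ^ 3 := by
      rw [← Real.rpow_mul_natCast (by norm_num), Nat.cast_ofNat,
        div_mul_cancel₀ _ three_ne_zero, Real.rpow_natCast]

theorem ncard_le_ncard_mul_of_subset_biUnion {α ι : Type*} {A : Set ι} {F : Set α}
    {f : ι → Set α} {B : ℝ} (hA : A.Finite) (hf : ∀ i ∈ A, (f i).Finite)
    (hF : F ⊆ ⋃ i ∈ A, f i) (hB : ∀ i ∈ A, ((f i).ncard : ℝ) ≤ B) :
    (F.ncard : ℝ) ≤ A.ncard * B := by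
  lift A to Finset ι using hA
  calc (F.ncard : ℝ) ≤ ((⋃ i ∈ A, f i).ncard : ℝ) :=
        mod_cast Set.ncard_le_ncard hF (A.finite_toSet.biUnion hf)
    _ ≤ ∑ i ∈ A, ((f i).ncard : ℝ) := mod_cast A.set_ncard_biUnion_le f
    _ ≤ A.card • B := A.sum_le_card_nsmul _ _ hB
    _ = (A : Set ι).ncard * B := by rw [nsmul_eq_mul, Set.ncard_coe_finset]

theorem injOn_sdiff_singleton {α : Type*} (a : α) : Set.InjOn (· \ {a}) {s : Set α | a ∈ s} := by
  intro s (hs : a ∈ s) t (ht : a ∈ t) hst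
  calc s = insert a (s \ {a}) := (Set.insert_sdiff_self_of_mem hs).symm
    _ = insert a (t \ {a}) := congrArg (insert a) hst
    _ = t := Set.insert_sdiff_self_of_mem ht

section MaximalCliques

variable {V : Type*} {G : SimpleGraph V} {S T K : Set V} {u v : V}

theorem isMaxCliqueIn_iff_forall_exists_not_adj :
    IsMaxCliqueIn G S K ↔ K ⊆ S ∧ G.IsClique K ∧ ∀ w ∈ S, ∃ x ∈ K, ¬ G.Adj w x := by
  refine and_congr_right fun hKS ↦ and_congr_right fun hK ↦ ⟨fun hmax w hw ↦ ?_, ?_⟩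
  · by_contra! hadj
    have hclique : G.IsClique (insert w K) := hK.insert fun x hx _ ↦ hadj x hx
    have hins : K = insert w K :=
      hmax _ (Set.insert_subset hw hKS) hclique (Set.subset_insert w K)
    exact G.irrefl (hadj w (hins ▸ Set.mem_insert w K))
  · intro hnot K' hK'S hK' hKK'
    refine hKK'.antisymm fun w hw ↦ ?_
    obtain ⟨x, hx, hwx⟩ := hnot w (hK'S hw)
    obtain rfl : w = x := by_contra fun hne ↦ hwx (hK' hw (hKK' hx) hne)
    exact hx

theorem isMaxCliqueIn_univ : IsMaxCliqueIn G Set.univ K ↔ IsMaxClique G K := by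
  simp [IsMaxCliqueIn, IsMaxClique]

theorem finite_setOf_isMaxCliqueIn (hS : S.Finite) : {K | IsMaxCliqueIn G S K}.Finite :=
  hS.finite_subsets.subset fun _ hK ↦ hK.1

theorem finite_setOf_isMaxCliqueIn_sdiff_singleton (hS : S.Finite) (v : V) :
    {K | v ∈ K ∧ IsMaxCliqueIn G S (K \ {v})}.Finite :=
  .of_injOn (fun _ hK ↦ hK.2) ((injOn_sdiff_singleton v).mono fun _ hK ↦ hK.1)
    (finite_setOf_isMaxCliqueIn hS)

theorem ncard_setOf_isMaxCliqueIn_sdiff_singleton_le (hS : S.Finite) (v : V) :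
    {K | v ∈ K ∧ IsMaxCliqueIn G S (K \ {v})}.ncard ≤ {K | IsMaxCliqueIn G S K}.ncard :=
  Set.ncard_le_ncard_of_injOn _ (fun _ hK ↦ hK.2)
    ((injOn_sdiff_singleton v).mono fun _ hK ↦ hK.1) (finite_setOf_isMaxCliqueIn hS)

namespace IsMaxCliqueIn

theorem of_subset (h : IsMaxCliqueIn G T K) (hST : S ⊆ T) (hKS : K ⊆ S) :
    IsMaxCliqueIn G S K :=
  ⟨hKS, h.2.1, fun K' hK' ↦ h.2.2 K' (hK'.trans hST)⟩

theorem exists_not_adj (h : IsMaxCliqueIn G S K) (hv : v ∈ S) : ∃ u ∈ K, ¬ G.Adj v u :=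
  (isMaxCliqueIn_iff_forall_exists_not_adj.1 h).2.2 v hv

theorem sdiff_singleton (h : IsMaxCliqueIn G S K) (hu : u ∈ K) :
    IsMaxCliqueIn G (G.neighborSet u ∩ S) (K \ {u}) := by
  refine isMaxCliqueIn_iff_forall_exists_not_adj.2
    ⟨fun x hx ↦ ⟨h.2.1 hu hx.1 (Ne.symm hx.2), h.1 hx.1⟩, h.2.1.subset Set.sdiff_subset, ?_⟩
  rintro w ⟨huw, hw⟩
  obtain ⟨x, hx, hwx⟩ := h.exists_not_adj hw
  exact ⟨x, ⟨hx, fun hxu ↦ hwx (hxu ▸ SimpleGraph.Adj.symm huw)⟩, hwx⟩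

theorem exists_compl_adj_of_not_sdiff_singleton (h : IsMaxCliqueIn G S K)
    (hnot : ¬ IsMaxCliqueIn G (S \ {v}) (K \ {v})) :
    ∃ w ∈ S, Gᶜ.Adj v w ∧ K \ {v} ⊆ G.neighborSet w := by
  obtain ⟨w, hw, hadj⟩ : ∃ w ∈ S \ {v}, ∀ x ∈ K \ {v}, G.Adj w x := by
    by_contra! hcon
    exact hnot (isMaxCliqueIn_iff_forall_exists_not_adj.2
      ⟨Set.sdiff_subset_sdiff_left h.1, h.2.1.subset Set.sdiff_subset, hcon⟩)
  obtain ⟨x, hx, hwx⟩ := h.exists_not_adj hw.1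
  obtain rfl : x = v := by_contra fun hxv ↦ hwx (hadj x ⟨hx, hxv⟩)
  exact ⟨w, hw.1, ⟨Ne.symm hw.2, fun hxw ↦ hwx hxw.symm⟩, hadj⟩

end IsMaxCliqueIn

theorem ncard_setOf_isMaxCliqueIn_le_mul {B : ℝ} (hS : S.Finite) (hv : v ∈ S)
    (hB : ∀ u ∈ S \ G.neighborSet v,
      ({K | IsMaxCliqueIn G (G.neighborSet u ∩ S) K}.ncard : ℝ) ≤ B) :
    ({K | IsMaxCliqueIn G S K}.ncard : ℝ) ≤ (S \ G.neighborSet v).ncard * B := by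
  have hfin (u : V) : (G.neighborSet u ∩ S).Finite := hS.inter_of_right _
  refine ncard_le_ncard_mul_of_subset_biUnion hS.sdiff
    (fun u _ ↦ finite_setOf_isMaxCliqueIn_sdiff_singleton (hfin u) u) (fun K hK ↦ ?_)
    fun u hu ↦ (Nat.cast_le.2 (ncard_setOf_isMaxCliqueIn_sdiff_singleton_le (hfin u) u)).trans
      (hB u hu)
  obtain ⟨u, huK, hvu⟩ := hK.exists_not_adj hv
  exact Set.mem_biUnion (⟨hK.1 huK, hvu⟩ : u ∈ S \ G.neighborSet v)
    ⟨huK, hK.sdiff_singleton huK⟩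

theorem ncard_setOf_isMaxCliqueIn_empty_le_one : {K | IsMaxCliqueIn G ∅ K}.ncard ≤ 1 :=
  (Set.ncard_le_one (finite_setOf_isMaxCliqueIn Set.finite_empty)).2 fun _ hK _ hL ↦
    (Set.subset_empty_iff.1 hK.1).trans (Set.subset_empty_iff.1 hL.1).symm

theorem ncard_setOf_isMaxCliqueIn_le_three_rpow (hS : S.Finite) :
    ({K | IsMaxCliqueIn G S K}.ncard : ℝ) ≤ 3 ^ ((S.ncard : ℝ) / 3) := by
  induction hm : S.ncard using Nat.strong_induction_on generalizing S with
  | _ m ih =>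
  subst hm
  obtain rfl | hne := S.eq_empty_or_nonempty
  · simpa using ncard_setOf_isMaxCliqueIn_empty_le_one
  obtain ⟨v, hv, hmax⟩ := Set.exists_max_image S (fun u ↦ (G.neighborSet u ∩ S).ncard) hS hne
  set a := (S \ G.neighborSet v).ncard
  set b := (G.neighborSet v ∩ S).ncard
  have hab : a + b = S.ncard := by
    rw [add_comm, ← Set.ncard_inter_add_ncard_sdiff_eq_ncard S (G.neighborSet v) hS, Set.inter_comm]
  have hnbhd : ∀ u ∈ S, ({K | IsMaxCliqueIn G (G.neighborSet u ∩ S) K}.ncard : ℝ) ≤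
      3 ^ ((b : ℝ) / 3) := fun u hu ↦ by
    have hlt : (G.neighborSet u ∩ S).ncard < S.ncard :=
      Set.ncard_lt_ncard ⟨Set.inter_subset_right, fun h ↦ G.irrefl (h hu).1⟩ hS
    refine (ih _ hlt (hS.inter_of_right _) rfl).trans ?_
    gcongr
    exacts [by norm_num, hmax u hu]
  calc ({K | IsMaxCliqueIn G S K}.ncard : ℝ) ≤ a * 3 ^ ((b : ℝ) / 3) :=
        ncard_setOf_isMaxCliqueIn_le_mul hS hv fun u hu ↦ hnbhd u hu.1
    _ ≤ 3 ^ ((a : ℝ) / 3) * 3 ^ ((b : ℝ) / 3) := by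
        gcongr
        exact natCast_le_three_rpow_div_three a
    _ = 3 ^ ((S.ncard : ℝ) / 3) := by
        rw [← Real.rpow_add (by norm_num), ← add_div, ← hab, Nat.cast_add]

theorem IsMaxClique.exists_compl_adj_isMaxCliqueIn_commonNeighbors (hK : IsMaxClique G K)
    (hv : v ∈ K) (hnot : ¬ IsMaxCliqueIn G {u | u ≠ v} (K \ {v})) :
    ∃ w, Gᶜ.Adj v w ∧ IsMaxCliqueIn G (G.commonNeighbors v w) (K \ {v}) := by
  have hKuniv : IsMaxCliqueIn G Set.univ K := isMaxCliqueIn_univ.2 hK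
  have hnot' : ¬ IsMaxCliqueIn G (Set.univ \ {v}) (K \ {v}) := by
    rwa [← Set.compl_eq_univ_sdiff]
  obtain ⟨w, -, hvw, hKw⟩ := hKuniv.exists_compl_adj_of_not_sdiff_singleton hnot'
  have hKv := hKuniv.sdiff_singleton hv
  rw [Set.inter_univ] at hKv
  exact ⟨w, hvw, hKv.of_subset Set.inter_subset_left (Set.subset_inter hKv.1 hKw)⟩

end MaximalCliques

theorem card_case_three_cliques_le_general {V : Type*} [Finite V] {c : ℕ}
    (G : SimpleGraph V) (v : V)
    (hv : ∀ w, v ≠ w → c ≤ (G.commonNeighbors v w).ncard → G.Adj v w) :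
    ({K : Set V | IsMaxClique G K ∧ v ∈ K ∧
        ¬ IsMaxCliqueIn G {u : V | u ≠ v} (K \ {v})}.ncard : ℝ) ≤
      (Gᶜ.neighborSet v).ncard * 3 ^ (((c : ℝ) - 1) / 3) := by
  have hfin (w : V) : (G.commonNeighbors v w).Finite := Set.toFinite _
  refine ncard_le_ncard_mul_of_subset_biUnion (Set.toFinite _)
    (f := fun w ↦ {K | v ∈ K ∧ IsMaxCliqueIn G (G.commonNeighbors v w) (K \ {v})})
    (fun w _ ↦ finite_setOf_isMaxCliqueIn_sdiff_singleton (hfin w) v) ?_ fun w hw ↦ ?_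
  · rintro K ⟨hK, hvK, hnot⟩
    obtain ⟨w, hvw, hKw⟩ := hK.exists_compl_adj_isMaxCliqueIn_commonNeighbors hvK hnot
    exact Set.mem_biUnion hvw ⟨hvK, hKw⟩
  · have hcard : ((G.commonNeighbors v w).ncard : ℝ) ≤ c - 1 := by
      rw [le_sub_iff_add_le]
      exact_mod_cast lt_of_not_ge fun hle ↦ hw.2 (hv w hw.1 hle)
    calc ({K | v ∈ K ∧ IsMaxCliqueIn G (G.commonNeighbors v w) (K \ {v})}.ncard : ℝ)
        ≤ {K | IsMaxCliqueIn G (G.commonNeighbors v w) K}.ncard :=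
          mod_cast ncard_setOf_isMaxCliqueIn_sdiff_singleton_le (hfin w) v
      _ ≤ 3 ^ (((G.commonNeighbors v w).ncard : ℝ) / 3) :=
          ncard_setOf_isMaxCliqueIn_le_three_rpow (hfin w)
      _ ≤ 3 ^ (((c : ℝ) - 1) / 3) := by
          gcongr
          norm_num

/-- In a `c`-closed graph on `n` vertices, for any vertex `v`, the number of
maximal cliques `K` of `G` with `v ∈ K` such that `K \ {v}` is not a maximal
clique of `G \ {v}` is at most `n * 3 ^ ((c - 1)/3)`. -/
theorem card_case_three_cliques_le {V : Type*} [Fintype V] {c n : ℕ} (hc : 0 < c)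
    (G : SimpleGraph V) (hcard : Fintype.card V = n) (hG : CClosed c G) (v : V) :
    (({K : Set V | IsMaxClique G K ∧ v ∈ K ∧
        ¬ IsMaxCliqueIn G {u : V | u ≠ v} (K \ {v})}.ncard : ℝ)) ≤
      (n : ℝ) * 3 ^ (((c : ℝ) - 1) / 3) := by
  refine (card_case_three_cliques_le_general G v (hG v)).trans ?_
  gcongr
  simpa only [hcard, Nat.card_eq_fintype_card] using Set.ncard_le_card (Gᶜ.neighborSet v)
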